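/- For all natural numbers n and ℓ, K(n,ℓ) equals the number of flip-equivalence classes of planar binary trees with exactly n nodes whose class cardinality is 2^ℓ (equivalently, whose members have exactly ℓ internal positions with non-flip-equivalent children subtrees); in particular K(n,ℓ) is a natural number. -/

import Mathlib

/-- Planar binary trees. -/
inductive T : Type where
  | nil : T
  | node : T → T → T

/-- The number of nodes of a planar binary tree. -/
def T.nodes : T → ℕ
  | .nil => 0
  | .node a b => a.nodes + b.nodes + 1

/-- Flip equivalence: the least relation such that `nil ≈ nil` and, whenever `a ≈ c` and
`b ≈ d`, both `node a b ≈ node c d` and `node a b ≈ node d c`. -/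
inductive Flip : T → T → Prop where
  | nil : Flip .nil .nil
  | node {a b c d : T} : Flip a c → Flip b d → Flip (.node a b) (.node c d)
  | swap {a b c d : T} : Flip a c → Flip b d → Flip (.node a b) (.node d c)

open Classical in
/-- The number of internal positions of a tree whose two children subtrees are not
flip-equivalent. -/
noncomputable def ell : T → ℕ
  | .nil => 0
  | .node a b => ell a + ell b + (if Flip a b then 0 else 1)

open Classical in
/-- The array `K n ℓ`: base cases (taking precedence) `K n 0 = 1` if `n = 2^r - 1` and `0`
otherwise; `K s t = 0` for `t ≥ s > 0`; `K s (s-1) = 1` for `s > 1`; otherwise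
`K (2n) ℓ = (1/2) · ∑_{k=0}^{2n-1} ∑_{v=0}^{ℓ-1} K k v · K (2n-1-k) (ℓ-1-v)`,
`K (2n+1) (2ℓ) = K n ℓ + (1/2) · ∑_{k=0}^{2n} ∑_{v=0}^{2ℓ-1} K k v · K (2n-k) (2ℓ-1-v)` and
`K (2n+1) (2ℓ+1) = (1/2) · (-K n ℓ + ∑_{k=0}^{2n} ∑_{v=0}^{2ℓ} K k v · K (2n-k) (2ℓ-v))`. -/
noncomputable def K : ℕ → ℕ → ℚ
  | n, l =>
    if l = 0 then (if ∃ r : ℕ, n = 2 ^ r - 1 then 1 else 0)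
    else if 0 < n ∧ n ≤ l then 0
    else if 1 < n ∧ l = n - 1 then 1
    else if h : n % 2 = 0 then
      (1 / 2) * ∑ k ∈ (Finset.range n).attach, ∑ v ∈ Finset.range l,
        K k.1 v * K (n - 1 - k.1) (l - 1 - v)
    else if l % 2 = 0 then
      K (n / 2) (l / 2) + (1 / 2) * ∑ k ∈ (Finset.range n).attach, ∑ v ∈ Finset.range l,
        K k.1 v * K (n - 1 - k.1) (l - 1 - v)
    else
      (1 / 2) * (- K (n / 2) (l / 2) + ∑ k ∈ (Finset.range n).attach, ∑ v ∈ Finset.range l,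
        K k.1 v * K (n - 1 - k.1) (l - 1 - v))
termination_by n l => n
decreasing_by
  · have := Finset.mem_range.mp k.2; omega
  · have := Finset.mem_range.mp k.2; omega
  · omega
  · have := Finset.mem_range.mp k.2; omega
  · have := Finset.mem_range.mp k.2; omega
  · omega
  · have := Finset.mem_range.mp k.2; omega
  · have := Finset.mem_range.mp k.2; omega

theorem Flip.rfl' : ∀ t : T, Flip t t
  | .nil => .nil
  | .node a b => .node (Flip.rfl' a) (Flip.rfl' b)

theorem Flip.symm' {s t : T} (h : Flip s t) : Flip t s := by
  induction h with
  | nil => exact .nil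
  | node _ _ h1 h2 => exact .node h1 h2
  | swap _ _ h1 h2 => exact .swap h2 h1

theorem Flip.trans' {s t : T} (h : Flip s t) : ∀ {u : T}, Flip t u → Flip s u := by
  induction h with
  | nil => intro u h; exact h
  | node _ _ h1 h2 =>
    intro u h
    cases h with
    | node h3 h4 => exact .node (h1 h3) (h2 h4)
    | swap h3 h4 => exact .swap (h1 h3) (h2 h4)
  | swap _ _ h1 h2 =>
    intro u h
    cases h with
    | node h3 h4 => exact .swap (h1 h4) (h2 h3)
    | swap h3 h4 => exact .node (h1 h4) (h2 h3)

instance flipSetoid : Setoid T := ⟨Flip, ⟨Flip.rfl', fun h => Flip.symm' h, fun h h' => Flip.trans' h h'⟩⟩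

theorem Flip.nodes_eq {s t : T} (h : Flip s t) : s.nodes = t.nodes := by
  induction h with
  | nil => rfl
  | node _ _ h1 h2 => simp [T.nodes, h1, h2]
  | swap _ _ h1 h2 => simp [T.nodes, h1, h2, add_comm]

theorem Flip.congr_iff {a b c d : T} (h : Flip a c) (h' : Flip b d) : Flip a b ↔ Flip c d :=
  ⟨fun k => (h.symm'.trans' k).trans' h', fun k => (h.trans' k).trans' h'.symm'⟩

theorem Flip.comm' {a b : T} : Flip a b ↔ Flip b a := ⟨Flip.symm', Flip.symm'⟩

theorem Flip.ell_eq {s t : T} (h : Flip s t) : ell s = ell t := by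
  induction h with
  | nil => rfl
  | node k1 k2 h1 h2 =>
    have hk := k1.congr_iff k2
    rw [ell, ell, h1, h2]
    split_ifs <;> first | rfl | tauto
  | swap k1 k2 h1 h2 =>
    have hk := (k1.congr_iff k2).trans Flip.comm'
    rw [ell, ell, h1, h2]
    split_ifs <;> first | omega | (exfalso; tauto)

abbrev FQ : Type := Quotient flipSetoid

def FQ.nodes (A : FQ) : ℕ := Quotient.lift T.nodes (fun _ _ h => Flip.nodes_eq h) A
noncomputable def FQ.ell (A : FQ) : ℕ := Quotient.lift _root_.ell (fun _ _ h => Flip.ell_eq h) A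
def FQ.nil : FQ := Quotient.mk _ T.nil
def FQ.node (A B : FQ) : FQ :=
  Quotient.map₂ T.node (fun _ _ h _ _ h' => Flip.node h h') A B

theorem FQ.nodes_node (A B : FQ) : (FQ.node A B).nodes = A.nodes + B.nodes + 1 := by
  induction A using Quotient.ind
  induction B using Quotient.ind
  rfl

open Classical in
theorem FQ.ell_node (A B : FQ) :
    (FQ.node A B).ell = A.ell + B.ell + (if A = B then 0 else 1) := by
  induction A using Quotient.ind
  induction B using Quotient.ind
  rename_i a b
  change _root_.ell (T.node a b) = _
  rw [_root_.ell]
  have : (Quotient.mk flipSetoid a = Quotient.mk flipSetoid b) ↔ Flip a b := Quotient.eq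
  simp only [this]
  rfl

theorem FQ.node_eq {A B C D : FQ} :
    FQ.node A B = FQ.node C D ↔ (A = C ∧ B = D) ∨ (A = D ∧ B = C) := by
  induction A using Quotient.ind
  induction B using Quotient.ind
  induction C using Quotient.ind
  induction D using Quotient.ind
  rename_i a b c d
  have e : ∀ x y : T, (Quotient.mk flipSetoid x = Quotient.mk flipSetoid y) ↔ Flip x y :=
    fun _ _ => Quotient.eq
  change Quotient.mk flipSetoid (T.node a b) = Quotient.mk flipSetoid (T.node c d) ↔ _
  simp only [e]
  constructor
  · intro h
    cases h with
    | node h1 h2 => exact Or.inl ⟨h1, h2⟩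
    | swap h1 h2 => exact Or.inr ⟨h1, h2⟩
  · rintro (⟨h1, h2⟩ | ⟨h1, h2⟩)
    · exact .node h1 h2
    · exact .swap h1 h2

theorem FQ.node_comm (A B : FQ) : FQ.node A B = FQ.node B A :=
  FQ.node_eq.2 (Or.inr ⟨rfl, rfl⟩)

theorem FQ.cases' (A : FQ) : A = FQ.nil ∨ ∃ B C, A = FQ.node B C := by
  induction A using Quotient.ind
  rename_i a
  cases a with
  | nil => exact Or.inl rfl
  | node b c => exact Or.inr ⟨Quotient.mk _ b, Quotient.mk _ c, rfl⟩

theorem T.finite_le (n : ℕ) : {t : T | t.nodes ≤ n}.Finite := by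
  induction n with
  | zero =>
    refine (Set.finite_singleton T.nil).subset ?_
    intro t ht
    cases t with
    | nil => rfl
    | node a b => simp [T.nodes] at ht
  | succ n ih =>
    refine ((ih.image2 T.node ih).insert T.nil).subset ?_
    intro t ht
    cases t with
    | nil => exact Or.inl rfl
    | node a b =>
      simp only [T.nodes, Set.mem_ofPred_eq] at ht
      exact Or.inr ⟨a, by simp only [Set.mem_ofPred_eq]; omega,
        b, by simp only [Set.mem_ofPred_eq]; omega, rfl⟩

theorem FQ.finite_set (n l : ℕ) : {A : FQ | A.nodes = n ∧ A.ell = l}.Finite := by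
  refine ((T.finite_le n).image (Quotient.mk flipSetoid)).subset ?_
  intro A hA
  induction A using Quotient.ind
  rename_i a
  exact ⟨a, le_of_eq hA.1, rfl⟩

noncomputable def FQ.F (n l : ℕ) : Finset FQ := (FQ.finite_set n l).toFinset

theorem FQ.mem_F {n l : ℕ} {A : FQ} : A ∈ FQ.F n l ↔ A.nodes = n ∧ A.ell = l := by
  simp [FQ.F]

/-- ordered pairs with given totals -/
noncomputable def FQ.R (n l : ℕ) : Finset (FQ × FQ) := by
  classical
  exact (Finset.range (n+1) ×ˢ Finset.range (l+1)).biUnion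
    (fun p => FQ.F p.1 p.2 ×ˢ FQ.F (n - p.1) (l - p.2))

theorem FQ.mem_R {n l : ℕ} {p : FQ × FQ} :
    p ∈ FQ.R n l ↔ p.1.nodes + p.2.nodes = n ∧ p.1.ell + p.2.ell = l := by
  simp only [FQ.R, Finset.mem_biUnion, Finset.mem_product, Finset.mem_range, FQ.mem_F, Prod.exists]
  constructor
  · rintro ⟨a, b, h⟩
    omega
  · intro h
    exact ⟨p.1.nodes, p.1.ell, by omega⟩

theorem FQ.card_R (n l : ℕ) : (FQ.R n l).card =
    ∑ k ∈ Finset.range (n+1), ∑ v ∈ Finset.range (l+1),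
      (FQ.F k v).card * (FQ.F (n - k) (l - v)).card := by
  classical
  rw [FQ.R, Finset.card_biUnion, Finset.sum_product]
  · simp only [Finset.card_product]
  · rintro ⟨a, b⟩ _ ⟨c, d⟩ _ hne
    refine Finset.disjoint_left.2 ?_
    rintro ⟨A, B⟩ h1 h2
    simp only [Finset.mem_product, FQ.mem_F] at h1 h2
    apply hne
    rw [Prod.mk.injEq]
    omega

/-- diagonal classes -/
noncomputable def FQ.D (n l : ℕ) : ℕ :=
  if n % 2 = 0 ∧ l % 2 = 0 then (FQ.F (n/2) (l/2)).card else 0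

open Classical in
theorem FQ.card_R_diag (n l : ℕ) : ((FQ.R n l).filter (fun p => p.1 = p.2)).card = FQ.D n l := by
  rw [FQ.D]
  split_ifs with h
  · symm
    apply Finset.card_bij (fun A _ => (A, A))
    · intro A hA
      rw [FQ.mem_F] at hA
      simp only [Finset.mem_filter, FQ.mem_R, and_true]
      omega
    · intro A _ B _ h
      exact (Prod.mk.inj h).1
    · rintro ⟨A, B⟩ hb
      simp only [Finset.mem_filter, FQ.mem_R] at hb
      obtain ⟨h1, rfl⟩ := hb
      exact ⟨A, by rw [FQ.mem_F]; omega, rfl⟩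
  · rw [Finset.card_eq_zero, Finset.filter_eq_empty_iff]
    rintro ⟨A, B⟩ hb hab
    rw [FQ.mem_R] at hb
    simp only at hb hab
    subst hab
    omega

open Classical in
noncomputable def FQ.S (n l : ℕ) : Finset FQ :=
  (FQ.F n l).filter (fun A => ∃ B, A = FQ.node B B)

open Classical in
theorem FQ.card_S (n l : ℕ) : (FQ.S (n+1) l).card = FQ.D n l := by
  rw [FQ.D]
  split_ifs with h
  · symm
    apply Finset.card_bij (fun A _ => FQ.node A A)
    · intro A hA
      rw [FQ.mem_F] at hA
      simp only [FQ.S, Finset.mem_filter, FQ.mem_F, FQ.nodes_node, FQ.ell_node, if_true]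
      exact ⟨by omega, A, rfl⟩
    · intro A _ B _ h
      rw [FQ.node_eq] at h
      tauto
    · intro A hA
      simp only [FQ.S, Finset.mem_filter, FQ.mem_F] at hA
      obtain ⟨h1, B, rfl⟩ := hA
      simp only [FQ.nodes_node, FQ.ell_node, if_true] at h1
      exact ⟨B, by rw [FQ.mem_F]; omega, rfl⟩
  · rw [Finset.card_eq_zero, FQ.S, Finset.filter_eq_empty_iff]
    rintro A hA ⟨B, rfl⟩
    simp only [FQ.mem_F, FQ.nodes_node, FQ.ell_node, if_true] at hA
    omega

open Classical in
theorem FQ.card_off (n l : ℕ) :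
    ((FQ.R n l).filter (fun p => ¬ p.1 = p.2)).card =
      2 * ((FQ.F (n+1) (l+1)).filter (fun A => ¬ ∃ B, A = FQ.node B B)).card := by
  rw [Finset.card_eq_sum_card_fiberwise (f := fun p => FQ.node p.1 p.2)
    (t := (FQ.F (n+1) (l+1)).filter (fun A => ¬ ∃ B, A = FQ.node B B))]
  · rw [mul_comm, ← smul_eq_mul, ← Finset.sum_const]
    apply Finset.sum_congr rfl
    intro A hA
    simp only [Finset.mem_filter, FQ.mem_F] at hA
    obtain ⟨⟨h1, h2⟩, h3⟩ := hA
    rcases FQ.cases' A with rfl | ⟨B, C, rfl⟩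
    · exact absurd h1.symm (Nat.succ_ne_zero n)
    · have hne : B ≠ C := by
        rintro rfl
        exact h3 ⟨B, rfl⟩
      rw [FQ.nodes_node] at h1
      rw [FQ.ell_node, if_neg hne] at h2
      rw [← Finset.card_pair (a := (B, C)) (b := (C, B)) (by
        intro h; exact hne (Prod.mk.inj h).1)]
      congr 1
      ext ⟨X, Y⟩
      simp only [Finset.mem_filter, FQ.mem_R, FQ.node_eq, Finset.mem_insert,
        Finset.mem_singleton, Prod.mk.injEq]
      constructor
      · rintro ⟨_, h⟩; exact h
      · rintro (⟨rfl, rfl⟩ | ⟨rfl, rfl⟩)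
        · exact ⟨⟨by omega, hne⟩, by simp⟩
        · exact ⟨⟨by omega, hne.symm⟩, by simp⟩
  · rintro ⟨X, Y⟩ h
    simp only [Finset.coe_filter, FQ.mem_R, Set.mem_ofPred_eq, FQ.mem_F, FQ.nodes_node,
      FQ.ell_node] at h ⊢
    rw [if_neg h.2]
    refine ⟨by omega, ?_⟩
    rintro ⟨B, hB⟩
    rw [FQ.node_eq] at hB
    apply h.2
    rcases hB with ⟨rfl, rfl⟩ | ⟨rfl, rfl⟩ <;> rfl

theorem FQ.rec_succ (n l : ℕ) :
    2 * (FQ.F (n+1) (l+1)).card + FQ.D n l = (FQ.R n l).card + 2 * FQ.D n (l+1) := by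
  classical
  have h1 := FQ.card_off n l
  have h2 := FQ.card_S n (l+1)
  have h3 := FQ.card_R_diag n l
  have h4 := Finset.card_filter_add_card_filter_not (s := FQ.R n l) (fun p => p.1 = p.2)
  have h5 := Finset.card_filter_add_card_filter_not (s := FQ.F (n+1) (l+1))
    (fun A => ∃ B, A = FQ.node B B)
  rw [FQ.S] at h2
  omega

theorem FQ.rec_zero (n : ℕ) : (FQ.F (n+1) 0).card = FQ.D n 0 := by
  classical
  rw [← FQ.card_S, FQ.S, Finset.filter_true_of_mem]
  intro A hA
  rw [FQ.mem_F] at hA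
  rcases FQ.cases' A with rfl | ⟨B, C, rfl⟩
  · exact absurd hA.1.symm (Nat.succ_ne_zero n)
  · have h := hA.2
    rw [FQ.ell_node] at h
    by_cases hBC : B = C
    · exact ⟨B, by rw [hBC]⟩
    · rw [if_neg hBC] at h
      omega

theorem FQ.F_zero_zero : FQ.F 0 0 = {FQ.nil} := by
  ext A
  rw [FQ.mem_F, Finset.mem_singleton]
  rcases FQ.cases' A with rfl | ⟨B, C, rfl⟩
  · exact ⟨fun _ => rfl, fun _ => ⟨rfl, rfl⟩⟩
  · constructor
    · rintro ⟨h, _⟩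
      rw [FQ.nodes_node] at h
      omega
    · intro h
      have := congrArg FQ.nodes h
      rw [FQ.nodes_node] at this
      exact absurd this (Nat.succ_ne_zero _)

theorem FQ.card_zero (n : ℕ) :
    ((∃ r : ℕ, n = 2 ^ r - 1) → (FQ.F n 0).card = 1) ∧
    ((¬ ∃ r : ℕ, n = 2 ^ r - 1) → (FQ.F n 0).card = 0) := by
  induction n using Nat.strong_induction_on with
  | _ n ih =>
  rcases n with _ | n
  · rw [FQ.F_zero_zero]
    exact ⟨fun _ => rfl, fun h => absurd ⟨0, rfl⟩ h⟩
  · rw [FQ.rec_zero, FQ.D]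
    have ih' := ih (n/2) (by omega)
    have key : (∃ r : ℕ, n + 1 = 2 ^ r - 1) ↔ (n % 2 = 0 ∧ ∃ r : ℕ, n / 2 = 2 ^ r - 1) := by
      constructor
      · rintro ⟨r, hr⟩
        rcases r with _ | r
        · simp at hr
        · rw [pow_succ] at hr
          exact ⟨by omega, r, by omega⟩
      · rintro ⟨h, r, hr⟩
        refine ⟨r + 1, ?_⟩
        have := Nat.one_le_two_pow (n := r)
        rw [pow_succ]
        omega
    rw [key]
    by_cases h : n % 2 = 0
    · simpa [h] using ih'
    · simp [h]

theorem T.ell_lt (t : T) : t = T.nil ∨ ell t + 1 ≤ t.nodes := by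
  induction t with
  | nil => exact Or.inl rfl
  | node a b iha ihb =>
    right
    rw [ell, T.nodes]
    rcases iha with rfl | iha
    · rcases ihb with rfl | ihb
      · simp [Flip.nil, ell]
      · simp only [ell, T.nodes]
        split_ifs <;> omega
    · rcases ihb with rfl | ihb
      · simp only [ell, T.nodes]
        split_ifs <;> omega
      · split_ifs <;> omega

theorem FQ.ell_lt (A : FQ) : A = FQ.nil ∨ A.ell + 1 ≤ A.nodes := by
  induction A using Quotient.ind
  rename_i a
  rcases T.ell_lt a with rfl | h
  · exact Or.inl rfl
  · exact Or.inr h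

theorem FQ.F_nil_succ (l : ℕ) : (FQ.F 0 (l+1)).card = 0 := by
  rw [Finset.card_eq_zero, Finset.eq_empty_iff_forall_notMem]
  intro A hA
  rw [FQ.mem_F] at hA
  rcases FQ.ell_lt A with rfl | h
  · exact absurd hA.2.symm (Nat.succ_ne_zero l)
  · omega

theorem FQ.F_big {n l : ℕ} (h0 : 0 < n) (h : n ≤ l) : (FQ.F n l).card = 0 := by
  rw [Finset.card_eq_zero, Finset.eq_empty_iff_forall_notMem]
  intro A hA
  rw [FQ.mem_F] at hA
  rcases FQ.ell_lt A with rfl | h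
  · have : FQ.nil.nodes = 0 := rfl
    omega
  · omega

theorem FQ.F_chain (n : ℕ) : (FQ.F (n+1) n).card = 1 := by
  induction n with
  | zero => exact (FQ.card_zero 1).1 ⟨1, rfl⟩
  | succ n ih =>
    rw [Finset.card_eq_one] at ih ⊢
    obtain ⟨A, hA⟩ := ih
    have hA' : ∀ X : FQ, (X.nodes = n + 1 ∧ X.ell = n) ↔ X = A := by
      intro X
      rw [← FQ.mem_F, hA, Finset.mem_singleton]
    have hn : FQ.nil.nodes = 0 := rfl
    have he : FQ.nil.ell = 0 := rfl
    have hAn := (hA' A).2 rfl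
    have hne : FQ.nil ≠ A := by
      rintro rfl
      omega
    refine ⟨FQ.node FQ.nil A, ?_⟩
    ext X
    rw [FQ.mem_F, Finset.mem_singleton]
    constructor
    · rintro ⟨h1, h2⟩
      rcases FQ.cases' X with rfl | ⟨B, C, rfl⟩
      · omega
      · rw [FQ.nodes_node] at h1
        rw [FQ.ell_node] at h2
        rcases FQ.ell_lt B with rfl | hB
        · rw [(hA' C).1]
          split_ifs at h2 with hh
          · subst hh; omega
          · omega
        · rcases FQ.ell_lt C with rfl | hC
          · rw [FQ.node_comm, (hA' B).1]
            split_ifs at h2 with hh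
            · subst hh; omega
            · omega
          · split_ifs at h2 <;> omega
    · rintro rfl
      rw [FQ.nodes_node, FQ.ell_node, if_neg hne]
      omega

theorem FQ.card_F_eq_K (n l : ℕ) : ((FQ.F n l).card : ℚ) = K n l := by
  induction n using Nat.strong_induction_on generalizing l with
  | _ n ih =>
  rw [K]
  split_ifs with h1 h2 h3 h4 h5 h6
  · subst h1; exact_mod_cast (FQ.card_zero n).1 h2
  · subst h1; exact_mod_cast (FQ.card_zero n).2 h2
  · exact_mod_cast FQ.F_big h3.1 h3.2
  · obtain ⟨m, rfl⟩ : ∃ m, n = m + 1 := ⟨n - 1, by omega⟩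
    obtain rfl : l = m := by omega
    exact_mod_cast FQ.F_chain l
  all_goals
    obtain ⟨l, rfl⟩ : ∃ m, l = m + 1 := ⟨l - 1, by omega⟩
    rcases n with _ | n
    · first
      | (simp [FQ.F_nil_succ]; done)
      | (simp at h5; done)
    have hR : (∑ k ∈ (Finset.range (n+1)).attach, ∑ v ∈ Finset.range (l+1),
        K k.1 v * K (n + 1 - 1 - k.1) (l + 1 - 1 - v)) = ((FQ.R n l).card : ℚ) := by
      rw [Finset.sum_attach (Finset.range (n+1)) (fun k => ∑ v ∈ Finset.range (l+1),
        K k v * K (n + 1 - 1 - k) (l + 1 - 1 - v)), FQ.card_R]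
      push_cast
      apply Finset.sum_congr rfl
      intro k hk
      apply Finset.sum_congr rfl
      intro v hv
      rw [Finset.mem_range] at hk
      rw [ih k (by omega), ih (n-k) (by omega)]
    rw [hR]
    have hrec : (2 * (FQ.F (n+1) (l+1)).card + FQ.D n l : ℚ)
        = (FQ.R n l).card + 2 * FQ.D n (l+1) := by exact_mod_cast FQ.rec_succ n l
  · have e1 : FQ.D n l = 0 := by rw [FQ.D, if_neg (by omega)]
    have e2 : FQ.D n (l+1) = 0 := by rw [FQ.D, if_neg (by omega)]
    rw [e1, e2] at hrec
    push_cast at hrec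
    linarith
  · have e1 : FQ.D n l = 0 := by rw [FQ.D, if_neg (by omega)]
    have e2 : FQ.D n (l+1) = (FQ.F ((n+1)/2) ((l+1)/2)).card := by
      rw [FQ.D, if_pos (by omega)]
      congr 2
      omega
    rw [← ih ((n+1)/2) (by omega)]
    rw [e1, e2] at hrec
    push_cast at hrec
    linarith
  · have e1 : FQ.D n (l+1) = 0 := by rw [FQ.D, if_neg (by omega)]
    have e2 : FQ.D n l = (FQ.F ((n+1)/2) ((l+1)/2)).card := by
      rw [FQ.D, if_pos (by omega)]
      congr 2 <;> omega
    rw [← ih ((n+1)/2) (by omega)]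
    rw [e1, e2] at hrec
    push_cast at hrec
    linarith

def FQ.toSet (A : FQ) : Set T := {s | Quotient.mk flipSetoid s = A}

theorem FQ.toSet_inj : Function.Injective FQ.toSet := by
  intro A B h
  induction A using Quotient.ind
  rename_i a
  have : a ∈ FQ.toSet B := by
    rw [← h]
    exact rfl
  exact this

theorem FQ.classes_eq (n ℓ : ℕ) :
    {C : Set T | ∃ t : T, t.nodes = n ∧ _root_.ell t = ℓ ∧ C = {s : T | Flip s t}} =
      Set.image FQ.toSet {A : FQ | A.nodes = n ∧ A.ell = ℓ} := by
  have e : ∀ t : T, FQ.toSet (Quotient.mk flipSetoid t) = {s : T | Flip s t} := by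
    intro t
    ext s
    exact Quotient.eq (r := flipSetoid) (x := s) (y := t)
  ext C
  constructor
  · rintro ⟨t, h1, h2, rfl⟩
    exact ⟨Quotient.mk flipSetoid t, ⟨h1, h2⟩, e t⟩
  · rintro ⟨A, ⟨h1, h2⟩, rfl⟩
    induction A using Quotient.ind
    rename_i a
    exact ⟨a, h1, h2, e a⟩

/-- `K n ℓ` equals the number of flip-equivalence classes of planar binary trees with exactly
`n` nodes whose class cardinality is `2^ℓ` (equivalently, whose members have exactly `ℓ`
internal positions with non-flip-equivalent children subtrees); in particular `K n ℓ` is a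
natural number. -/
theorem K_counts_classes (n ℓ : ℕ) :
    {C : Set T | ∃ t : T, t.nodes = n ∧ ell t = ℓ ∧ C = {s : T | Flip s t}}.Finite ∧
    ({C : Set T | ∃ t : T, t.nodes = n ∧ ell t = ℓ ∧ C = {s : T | Flip s t}}.ncard : ℚ)
      = K n ℓ := by
  rw [FQ.classes_eq]
  refine ⟨(FQ.finite_set n ℓ).image _, ?_⟩
  rw [Set.ncard_image_of_injective _ FQ.toSet_inj, Set.ncard_eq_toFinset_card _ (FQ.finite_set n ℓ)]
  exact FQ.card_F_eq_K n ℓ
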